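/- arXiv:1008.1006 — 4 statements merged into one kernel-verified Lean document; each statement's English description precedes it below -/
import Mathlib

section
/- Discrete Stratonovich formula (Lemma 3.1, first identity). Let a ∈ ℝ^d, h > 0, and let f = (f¹,…,f^d) : h²ℤ₊ × G(a,h) → ℝ^d be a time-dependent vector field such that for each fixed t ∈ h²ℤ₊ the field f(t,·) is discrete conservative on G(a,h). Let X_r = (X_r¹,…,X_r^d) (r ≥ 1) with each X_r^j ∈ {−1,1}, set S_0 = a, S_n = a + h(X_1 + ⋯ + X_n), and t_r = r h². Then for every n ≥ 1: T_{S_0}^{S_n}(f(t_n,·), γ'₀) h = Σ_{r=1}^{n} T_{S_0}^{S_r}( f(t_r,·) − f(t_{r−1},·), γ'₀) h + Σ_{r=1}^{n} Σ_{j=1}^{d} ½ [ f^j(t_{r−1}, S_{r−1} + Σ_{i=1}^{j−1} h X_r^i e_i) + f^j(t_{r−1}, S_{r−1} + Σ_{i=1}^{j} h X_r^i e_i) ] · h X_r^j. -/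
/- Discrete Stratonovich formula (Lemma 3.1, first identity). -/

namespace DiscretePaths

/-- The sign `±1` associated to a boolean orientation. -/
noncomputable def sgn (b : Bool) : ℝ := if b then 1 else -1

/-- The vector `μ h e_j` of an oriented grid edge, where the edge is encoded as
`e = (j, b)` with `μ = sgn b`. -/
noncomputable def stepVec (d : ℕ) (h : ℝ) (e : Fin d × Bool) : Fin d → ℝ :=
  fun i => if i = e.1 then sgn e.2 * h else 0

/-- The endpoint of a discrete path starting at `b`, given by its list of oriented edges. -/
noncomputable def pathEnd (d : ℕ) (h : ℝ) (b : Fin d → ℝ) :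
    List (Fin d × Bool) → (Fin d → ℝ)
  | [] => b
  | e :: γ => pathEnd d h (fun i => b i + stepVec d h e i) γ

/-- The trapezoidal sum `T_γ(f, γ'₀) h` of the vector field `f` over the discrete path
starting at `b` with oriented edges `γ`. -/
noncomputable def trapSum (d : ℕ) (h : ℝ) (f : (Fin d → ℝ) → Fin d → ℝ)
    (b : Fin d → ℝ) : List (Fin d × Bool) → ℝ
  | [] => 0
  | e :: γ => h / 2 * sgn e.2 * (f b e.1 + f (fun i => b i + stepVec d h e i) e.1)
      + trapSum d h f (fun i => b i + stepVec d h e i) γ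

/-- Membership in the grid `G(a,h) = a + hℤ^d`. -/
def InGrid (d : ℕ) (a : Fin d → ℝ) (h : ℝ) (x : Fin d → ℝ) : Prop :=
  ∃ k : Fin d → ℤ, ∀ i, x i = a i + h * k i

/-- A vector field on the grid `G(a,h)` is discrete conservative if its trapezoidal sum
over every closed discrete path vanishes. -/
def DiscreteConservative (d : ℕ) (a : Fin d → ℝ) (h : ℝ)
    (f : (Fin d → ℝ) → Fin d → ℝ) : Prop :=
  ∀ b, InGrid d a h b → ∀ γ : List (Fin d × Bool), pathEnd d h b γ = b →
    trapSum d h f b γ = 0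

end DiscretePaths

open DiscretePaths

/-!
Write `I t r` for the trapezoidal sum of `f t` from `S 0` to `S r`. Telescoping along the diagonal,
`I n n` is the sum over `r` of the change in time `I r r - I (r - 1) r` and the change in space
`I (r - 1) r - I (r - 1) (r - 1)`. The former is the sum of the field `f r - f (r - 1)` up to `S r`.
By path independence, the latter is the sum of `f (r - 1)` over any path from `S (r - 1)` to `S r`,
in particular over the one that moves in the directions `1, …, d` in turn.
-/

namespace DiscretePaths

variable {d : ℕ} {h : ℝ}

theorem exists_sgn_eq {x : ℝ} (hx : x = 1 ∨ x = -1) : ∃ s, sgn s = x := by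
  rcases hx with rfl | rfl
  exacts [⟨true, rfl⟩, ⟨false, rfl⟩]

theorem sgn_not (s : Bool) : sgn (!s) = -sgn s := by
  cases s <;> simp [sgn]

theorem stepVec_not (j : Fin d) (s : Bool) : stepVec d h (j, !s) = -stepVec d h (j, s) := by
  funext i
  simp only [stepVec, Pi.neg_apply, sgn_not, neg_mul]
  split_ifs <;> simp

theorem inGrid_self (a : Fin d → ℝ) : InGrid d a h a := ⟨0, by simp⟩

section Path

variable (f g : (Fin d → ℝ) → Fin d → ℝ) (b : Fin d → ℝ)

theorem pathEnd_cons (e : Fin d × Bool) (γ : List (Fin d × Bool)) :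
    pathEnd d h b (e :: γ) = pathEnd d h (b + stepVec d h e) γ := rfl

theorem trapSum_cons (e : Fin d × Bool) (γ : List (Fin d × Bool)) :
    trapSum d h f b (e :: γ) = h / 2 * sgn e.2 * (f b e.1 + f (b + stepVec d h e) e.1)
      + trapSum d h f (b + stepVec d h e) γ := rfl

theorem pathEnd_append (γ δ : List (Fin d × Bool)) :
    pathEnd d h b (γ ++ δ) = pathEnd d h (pathEnd d h b γ) δ := by
  induction γ generalizing b with
  | nil => rfl
  | cons e _ ih => exact ih _

theorem trapSum_append (γ δ : List (Fin d × Bool)) :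
    trapSum d h f b (γ ++ δ) = trapSum d h f b γ + trapSum d h f (pathEnd d h b γ) δ := by
  induction γ generalizing b with
  | nil => exact (zero_add _).symm
  | cons e γ ih => rw [List.cons_append, trapSum_cons, trapSum_cons, pathEnd_cons, ih, add_assoc]

theorem trapSum_sub (γ : List (Fin d × Bool)) :
    trapSum d h (f - g) b γ = trapSum d h f b γ - trapSum d h g b γ := by
  induction γ generalizing b with
  | nil => exact (sub_zero 0).symm
  | cons e γ ih =>
    simp only [trapSum_cons, ih, Pi.sub_apply]
    ring

/-- The discrete path `γ` traversed backwards: its edges in reverse order, with opposite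
orientations. -/
def reversePath (γ : List (Fin d × Bool)) : List (Fin d × Bool) :=
  (γ.map fun e => (e.1, !e.2)).reverse

theorem reversePath_cons (e : Fin d × Bool) (γ : List (Fin d × Bool)) :
    reversePath (e :: γ) = reversePath γ ++ [(e.1, !e.2)] := by
  simp [reversePath]

theorem pathEnd_reversePath (γ : List (Fin d × Bool)) :
    pathEnd d h (pathEnd d h b γ) (reversePath γ) = b := by
  induction γ generalizing b with
  | nil => rfl
  | cons e γ ih =>
    rw [pathEnd_cons, reversePath_cons, pathEnd_append, ih, pathEnd_cons, stepVec_not,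
      add_neg_cancel_right]
    rfl

theorem trapSum_reversePath (γ : List (Fin d × Bool)) :
    trapSum d h f (pathEnd d h b γ) (reversePath γ) = -trapSum d h f b γ := by
  induction γ generalizing b with
  | nil => exact neg_zero.symm
  | cons e γ ih =>
    rw [pathEnd_cons, reversePath_cons, trapSum_append, ih, pathEnd_reversePath, trapSum_cons,
      trapSum_cons, stepVec_not, add_neg_cancel_right, sgn_not, trapSum]
    ring

end Path

section Conservative

variable {a b : Fin d → ℝ} {f : (Fin d → ℝ) → Fin d → ℝ} {γ δ : List (Fin d × Bool)}

theorem DiscreteConservative.trapSum_eq (hf : DiscreteConservative d a h f) (hb : InGrid d a h b)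
    (hγδ : pathEnd d h b γ = pathEnd d h b δ) : trapSum d h f b γ = trapSum d h f b δ := by
  have hclosed : pathEnd d h b (γ ++ reversePath δ) = b := by
    rw [pathEnd_append, hγδ, pathEnd_reversePath]
  have hloop := hf b hb _ hclosed
  rwa [trapSum_append, hγδ, trapSum_reversePath, add_neg_eq_zero] at hloop

theorem DiscreteConservative.trapSum_sub_trapSum (hf : DiscreteConservative d a h f)
    (hb : InGrid d a h b) {η : List (Fin d × Bool)}
    (hη : pathEnd d h (pathEnd d h b γ) η = pathEnd d h b δ) :
    trapSum d h f b δ - trapSum d h f b γ = trapSum d h f (pathEnd d h b γ) η := by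
  rw [← pathEnd_append] at hη
  rw [← hf.trapSum_eq hb hη, trapSum_append, add_sub_cancel_left]

end Conservative

section Vertices

variable {m : ℕ} {e : Fin m → Fin d × Bool} {p : Fin (m + 1) → Fin d → ℝ}

theorem pathEnd_ofFn (hp : ∀ k, p k.succ = p k.castSucc + stepVec d h (e k)) :
    pathEnd d h (p 0) (List.ofFn e) = p (Fin.last m) := by
  induction m with
  | zero => rfl
  | succ m ih =>
    have hp_zero : p 0 + stepVec d h (e 0) = p (Fin.succ 0) := (hp 0).symm
    rw [List.ofFn_succ, pathEnd_cons, hp_zero]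
    exact ih (p := fun k => p k.succ) fun k => hp k.succ

theorem trapSum_ofFn (f : (Fin d → ℝ) → Fin d → ℝ)
    (hp : ∀ k, p k.succ = p k.castSucc + stepVec d h (e k)) :
    trapSum d h f (p 0) (List.ofFn e) =
      ∑ k, h / 2 * sgn (e k).2 * (f (p k.castSucc) (e k).1 + f (p k.succ) (e k).1) := by
  induction m with
  | zero => rfl
  | succ m ih =>
    have hp_zero : p 0 + stepVec d h (e 0) = p (Fin.succ 0) := (hp 0).symm
    rw [List.ofFn_succ, trapSum_cons, Fin.sum_univ_succ, hp_zero]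
    exact congrArg _ (ih (p := fun k => p k.succ) fun k => hp k.succ)

end Vertices

section Staircase

variable (h) (b : Fin d → ℝ) (s : Fin d → Bool)

/-- The discrete path with one edge in each of the directions `1, …, d`, in this order, where `s j`
is the orientation of the edge in direction `j`. It joins opposite corners of a grid cube. -/
def staircase : List (Fin d × Bool) := List.ofFn fun j => (j, s j)

/-- The vertex that `staircase s` reaches after `k` edges from `b`. -/
noncomputable def staircaseVertex (k : ℕ) : Fin d → ℝ :=
  fun i => b i + if (i : ℕ) < k then h * sgn (s i) else 0

theorem staircaseVertex_zero : staircaseVertex h b s 0 = b := by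
  funext i
  simp [staircaseVertex]

theorem staircaseVertex_succ (j : Fin d) :
    staircaseVertex h b s (j + 1) = staircaseVertex h b s j + stepVec d h (j, s j) := by
  funext i
  rcases lt_trichotomy i j with hij | rfl | hij
  · simp [staircaseVertex, stepVec, hij, hij.le, hij.ne, Order.lt_add_one_iff]
  · simp [staircaseVertex, stepVec, mul_comm]
  · simp [staircaseVertex, stepVec, hij.not_ge, hij.not_gt, hij.ne', Order.lt_add_one_iff]

theorem staircaseVertex_last : staircaseVertex h b s d = fun i => b i + h * sgn (s i) := by
  funext i
  simp [staircaseVertex]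

theorem pathEnd_staircase :
    pathEnd d h b (staircase s) = fun i => b i + h * sgn (s i) := by
  have hend := pathEnd_ofFn (p := fun k => staircaseVertex h b s k) (staircaseVertex_succ h b s)
  rw [Fin.val_zero, staircaseVertex_zero, Fin.val_last] at hend
  simpa only [staircase, hend] using staircaseVertex_last h b s

theorem trapSum_staircase (f : (Fin d → ℝ) → Fin d → ℝ) :
    trapSum d h f b (staircase s) = ∑ j : Fin d,
      (f (fun i => b i + if (i : ℕ) < (j : ℕ) then h * sgn (s i) else 0) j
        + f (fun i => b i + if (i : ℕ) ≤ (j : ℕ) then h * sgn (s i) else 0) j)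
        / 2 * (h * sgn (s j)) := by
  have hsum := trapSum_ofFn (p := fun k => staircaseVertex h b s k) f (staircaseVertex_succ h b s)
  simp only [Fin.val_zero, staircaseVertex_zero] at hsum
  rw [staircase, hsum]
  refine Finset.sum_congr rfl fun j _ => ?_
  unfold staircaseVertex
  simp only [Fin.val_castSucc, Fin.val_succ, Nat.lt_succ_iff]
  ring

end Staircase

theorem diagonal_eq_add_sum_sub_add_sum_sub {M : Type*} [AddCommGroup M] (I : ℕ → ℕ → M) (n : ℕ) :
    I n n = I 0 0 + (∑ r ∈ Finset.Icc 1 n, (I r r - I (r - 1) r)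
      + ∑ r ∈ Finset.Icc 1 n, (I (r - 1) r - I (r - 1) (r - 1))) := by
  induction n with
  | zero => simp
  | succ n ih =>
    rw [← Finset.sum_add_distrib] at ih ⊢
    rw [Finset.sum_Icc_succ_top (by lia), ← add_assoc, ← ih, Nat.add_sub_cancel]
    abel

end DiscretePaths

/-- **Discrete Stratonovich formula.**  Since `f(t,·)` is discrete conservative for each
`t`, trapezoidal sums between two grid points are path independent; accordingly the
identity is stated for an arbitrary discrete path `γ` from `S_0 = a` to `S_n` and
arbitrary discrete paths `γr r` from `S_0` to `S_r`. -/
theorem discrete_stratonovich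
    (d : ℕ) (a : Fin d → ℝ) (h : ℝ) (hh : 0 < h)
    (f : ℕ → (Fin d → ℝ) → Fin d → ℝ)
    (hf : ∀ t : ℕ, DiscreteConservative d a h (f t))
    (X : ℕ → Fin d → ℝ)
    (hX : ∀ r : ℕ, ∀ j : Fin d, X r j = 1 ∨ X r j = -1)
    (S : ℕ → Fin d → ℝ)
    (hS : ∀ n i, S n i = a i + h * ∑ r ∈ Finset.range n, X (r + 1) i)
    (n : ℕ) (hn : 1 ≤ n)
    (γ : List (Fin d × Bool)) (hγ : pathEnd d h a γ = S n)
    (γr : ℕ → List (Fin d × Bool)) (hγr : ∀ r, pathEnd d h a (γr r) = S r) :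
    trapSum d h (f n) a γ
      = (∑ r ∈ Finset.Icc 1 n,
          trapSum d h (fun x j => f r x j - f (r - 1) x j) a (γr r))
        + ∑ r ∈ Finset.Icc 1 n, ∑ j : Fin d,
            (f (r - 1) (fun i => S (r - 1) i + if (i : ℕ) < (j : ℕ) then h * X r i else 0) j
              + f (r - 1) (fun i => S (r - 1) i + if (i : ℕ) ≤ (j : ℕ) then h * X r i else 0) j)
              / 2 * (h * X r j) := by
  choose s hs using fun r j => exists_sgn_eq (hX r j)
  obtain rfl : X = fun r j => sgn (s r j) := funext₂ fun r j => (hs r j).symm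
  have ha : InGrid d a h a := inGrid_self a
  have hS_zero : S 0 = a := by funext i; simp [hS]
  have hS_succ (r : ℕ) : pathEnd d h (S r) (staircase (s (r + 1))) = S (r + 1) := by
    rw [pathEnd_staircase]
    funext i
    simp only [hS, Finset.sum_range_succ]
    ring
  have hincrement (r : ℕ) : trapSum d h (f r) a (γr (r + 1)) - trapSum d h (f r) a (γr r)
      = trapSum d h (f r) (S r) (staircase (s (r + 1))) := by
    rw [← hγr r]
    exact (hf r).trapSum_sub_trapSum ha (by rw [hγr, hγr, hS_succ])
  have hstart : trapSum d h (f 0) a (γr 0) = 0 := hf 0 a ha _ ((hγr 0).trans hS_zero)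
  rw [(hf n).trapSum_eq ha (hγ.trans (hγr n).symm),
    diagonal_eq_add_sum_sub_add_sum_sub (fun t r => trapSum d h (f t) a (γr r)) n, hstart, zero_add]
  congr 1 <;> refine Finset.sum_congr rfl fun r hr => ?_
  · exact (trapSum_sub (f r) (f (r - 1)) a (γr r)).symm
  · obtain ⟨r, rfl⟩ := Nat.exists_eq_add_of_le' (Finset.mem_Icc.mp hr).1
    exact (hincrement r).trans (trapSum_staircase ..)
end

section
/- A planar vector field f = (f¹, f²) : G(a,h) → ℝ² is discrete conservative on the grid G(a,h) if and only if its discrete curl vanishes at every grid point, i.e. (curl_h f)(x) = 0 for all x ∈ G(a,h), where (curl_h f)(x) := (1/(2h)) { f¹(x¹,x²) + f¹(x¹+h,x²) + f²(x¹+h,x²) + f²(x¹+h,x²+h) − f¹(x¹+h,x²+h) − f¹(x¹,x²+h) − f²(x¹,x²+h) − f²(x¹,x²) } is (1/h²) times the trapezoidal sum over the counterclockwise directed boundary of the elementary square [x¹, x¹+h] × [x², x²+h]. -/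
open DiscretePaths

/-- The discrete curl of a planar vector field `f = (f¹, f²)` at `x`:
`(1/h²)` times the trapezoidal sum over the counterclockwise boundary of the elementary
square `[x¹, x¹+h] × [x², x²+h]`.  Here `f p 0 = f¹(p)` and `f p 1 = f²(p)`. -/
noncomputable def curlh (h : ℝ) (f : (Fin 2 → ℝ) → Fin 2 → ℝ) (x : Fin 2 → ℝ) : ℝ :=
  1 / (2 * h) *
    (f x 0 + f ![x 0 + h, x 1] 0 + f ![x 0 + h, x 1] 1 + f ![x 0 + h, x 1 + h] 1
      - f ![x 0 + h, x 1 + h] 0 - f ![x 0, x 1 + h] 0 - f ![x 0, x 1 + h] 1 - f x 1)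

/-!
A field with a potential is conservative, because trapezoidal sums telescope. Conversely, the
trapezoidal sums over single edges form a discrete 1-form on `ℤ^d`, and vanishing curl says that
this form is closed, so it is enough to integrate closed forms on `ℤ^d`. By induction on `d`, take
a potential on the hyperplane `k 0 = 0` and extend it by summing along the lines in direction
`e_0`; closedness carries the potential equation from each hyperplane `k 0 = m` to the next.
-/

namespace DiscretePaths

section LatticePotential

variable {G : Type*} [AddCommGroup G]

theorem exists_antidifference_int (u : ℤ → G) :
    ∃ U : ℤ → G, U 0 = 0 ∧ ∀ n, U (n + 1) - U n = u n := by
  refine ⟨fun n => ∑ i ∈ Finset.Ico 0 n, u i - ∑ i ∈ Finset.Ico n 0, u i, by simp, fun n => ?_⟩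
  rcases le_or_gt 0 n with hn | hn
  · simp [← Finset.sum_Ico_add_eq_sum_Ico_add_one hn, hn, Int.le_add_one hn]
  · simp [← Finset.insert_Ico_add_one_left_eq_Ico hn, hn.le, Int.add_one_le_of_lt hn]

theorem int_funext_of_add_one_sub_eq {U V : ℤ → G} (h_zero : U 0 = V 0)
    (h_diff : ∀ n, U (n + 1) - U n = V (n + 1) - V n) : U = V := by
  have h_periodic : Function.Periodic (U - V) 1 := fun n => by
    simpa [sub_eq_sub_iff_sub_eq_sub] using h_diff n
  funext n
  simpa [h_zero, sub_eq_zero] using h_periodic.int_mul_eq n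

theorem cons_add_single_zero {M : Type*} [AddZeroClass M] {d : ℕ} (m n : M) (l : Fin d → M) :
    (Fin.cons m l + Pi.single 0 n : Fin (d + 1) → M) = Fin.cons (m + n) l := by
  ext i; cases i using Fin.cases <;> simp

theorem cons_add_single_succ {M : Type*} [AddZeroClass M] {d : ℕ} (m n : M) (l : Fin d → M)
    (j : Fin d) :
    (Fin.cons m l + Pi.single j.succ n : Fin (d + 1) → M) = Fin.cons m (l + Pi.single j n) := by
  ext i; cases i using Fin.cases <;> simp [Pi.single_apply]

theorem exists_potential_of_closed {d : ℕ} (w : (Fin d → ℤ) → Fin d → G)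
    (h_closed : ∀ k i j,
      w k i + w (k + Pi.single i 1) j = w k j + w (k + Pi.single j 1) i) :
    ∃ φ : (Fin d → ℤ) → G, ∀ k j, φ (k + Pi.single j 1) - φ k = w k j := by
  induction d with
  | zero => exact ⟨0, fun _ j => j.elim0⟩
  | succ d ih =>
    obtain ⟨φ, hφ⟩ := ih (fun l j => w (Fin.cons 0 l) j.succ) fun l i j => by
      simpa only [cons_add_single_succ] using h_closed (Fin.cons 0 l) i.succ j.succ
    choose U hU_zero hU_diff using fun l : Fin d → ℤ =>
      exists_antidifference_int fun m => w (Fin.cons m l) 0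
    refine ⟨fun k => φ (Fin.tail k) + U (Fin.tail k) (k 0), fun k j => ?_⟩
    cases k using Fin.consCases with | _ m l
    cases j using Fin.cases with
    | zero => simp [cons_add_single_zero, hU_diff]
    | succ j =>
      have h_slices : (fun m => φ (l + Pi.single j 1) + U (l + Pi.single j 1) m) =
          fun m => w (Fin.cons m l) j.succ + (φ l + U l m) := by
        refine int_funext_of_add_one_sub_eq (by simp [hU_zero, ← hφ]) fun m => ?_
        have h_square := h_closed (Fin.cons m l) 0 j.succ
        rw [cons_add_single_zero, cons_add_single_succ, ← hU_diff, ← hU_diff] at h_square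
        grind
      simpa [cons_add_single_succ, sub_eq_iff_eq_add] using congrFun h_slices m

end LatticePotential

variable {d : ℕ} {a : Fin d → ℝ} {h : ℝ} {f : (Fin d → ℝ) → Fin d → ℝ} {x : Fin d → ℝ}

/-- The trapezoidal sum of `f` along the positively oriented edge from `x` to `x + h e_j`. -/
noncomputable def trapEdge (h : ℝ) (f : (Fin d → ℝ) → Fin d → ℝ) (x : Fin d → ℝ)
    (j : Fin d) : ℝ :=
  h / 2 * (f x j + f (x + Pi.single j h) j)

theorem add_stepVec_true (x : Fin d → ℝ) (j : Fin d) :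
    (fun i => x i + stepVec d h (j, true) i) = x + Pi.single j h := by
  ext i; simp [stepVec, sgn, Pi.single_apply]

theorem add_stepVec_false (x : Fin d → ℝ) (j : Fin d) :
    (fun i => x i + stepVec d h (j, false) i) = x - Pi.single j h := by
  ext i; simp [stepVec, sgn, Pi.single_apply, sub_eq_add_neg, neg_ite]

theorem pathEnd_nil (x : Fin d → ℝ) : pathEnd d h x [] = x := rfl

theorem pathEnd_cons_true (x : Fin d → ℝ) (j : Fin d) (γ : List (Fin d × Bool)) :
    pathEnd d h x ((j, true) :: γ) = pathEnd d h (x + Pi.single j h) γ := by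
  rw [pathEnd, add_stepVec_true]

theorem pathEnd_cons_false (x : Fin d → ℝ) (j : Fin d) (γ : List (Fin d × Bool)) :
    pathEnd d h x ((j, false) :: γ) = pathEnd d h (x - Pi.single j h) γ := by
  rw [pathEnd, add_stepVec_false]

theorem trapSum_nil (f : (Fin d → ℝ) → Fin d → ℝ) (x : Fin d → ℝ) :
    trapSum d h f x [] = 0 := rfl

theorem trapSum_cons_true (f : (Fin d → ℝ) → Fin d → ℝ) (x : Fin d → ℝ) (j : Fin d)
    (γ : List (Fin d × Bool)) :
    trapSum d h f x ((j, true) :: γ) =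
      trapEdge h f x j + trapSum d h f (x + Pi.single j h) γ := by
  simp [trapSum, add_stepVec_true, trapEdge, sgn]

theorem trapSum_cons_false (f : (Fin d → ℝ) → Fin d → ℝ) (x : Fin d → ℝ) (j : Fin d)
    (γ : List (Fin d × Bool)) :
    trapSum d h f x ((j, false) :: γ) =
      -trapEdge h f (x - Pi.single j h) j + trapSum d h f (x - Pi.single j h) γ := by
  simp [trapSum, add_stepVec_false, trapEdge, sgn, add_comm]

/-- The point of `G(a,h)` with integer coordinates `k`. -/
def gridPoint (a : Fin d → ℝ) (h : ℝ) (k : Fin d → ℤ) : Fin d → ℝ :=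
  fun i => a i + h * k i

theorem inGrid_gridPoint (a : Fin d → ℝ) (h : ℝ) (k : Fin d → ℤ) :
    InGrid d a h (gridPoint a h k) :=
  ⟨k, fun _ => rfl⟩

theorem InGrid.exists_gridPoint_eq (hx : InGrid d a h x) : ∃ k, gridPoint a h k = x :=
  hx.imp fun _ hk => (funext hk).symm

theorem gridPoint_injective (a : Fin d → ℝ) (hh : h ≠ 0) :
    Function.Injective (gridPoint a h) := fun k l hkl => by
  ext i
  simpa [gridPoint, hh] using congrFun hkl i

theorem gridPoint_add_single (a : Fin d → ℝ) (h : ℝ) (k : Fin d → ℤ) (j : Fin d) :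
    gridPoint a h (k + Pi.single j 1) = gridPoint a h k + Pi.single j h := by
  ext i
  rcases eq_or_ne i j with rfl | hij
  · simp [gridPoint, mul_add, add_assoc]
  · simp [gridPoint, hij]

theorem InGrid.add_single (hx : InGrid d a h x) (j : Fin d) :
    InGrid d a h (x + Pi.single j h) := by
  obtain ⟨k, rfl⟩ := hx.exists_gridPoint_eq
  rw [← gridPoint_add_single]
  exact inGrid_gridPoint a h _

theorem InGrid.sub_single (hx : InGrid d a h x) (j : Fin d) :
    InGrid d a h (x - Pi.single j h) := by
  obtain ⟨k, rfl⟩ := hx.exists_gridPoint_eq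
  rw [← sub_add_cancel k (Pi.single j 1), gridPoint_add_single, add_sub_cancel_right]
  exact inGrid_gridPoint a h _

/-- `F` is a discrete potential of `f` on `G(a,h)`: its increment along each edge is the
trapezoidal sum of `f` along that edge. The values of `F` off the grid are irrelevant. -/
def IsDiscretePotential (a : Fin d → ℝ) (h : ℝ) (f : (Fin d → ℝ) → Fin d → ℝ)
    (F : (Fin d → ℝ) → ℝ) : Prop :=
  ∀ x, InGrid d a h x → ∀ j, F (x + Pi.single j h) - F x = trapEdge h f x j

theorem IsDiscretePotential.trapSum_eq_sub {F : (Fin d → ℝ) → ℝ}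
    (hF : IsDiscretePotential a h f F) (hx : InGrid d a h x) (γ : List (Fin d × Bool)) :
    trapSum d h f x γ = F (pathEnd d h x γ) - F x := by
  induction γ generalizing x with
  | nil => rw [trapSum_nil, pathEnd_nil, sub_self]
  | cons e γ ih =>
    obtain ⟨j, _ | _⟩ := e
    · rw [trapSum_cons_false, pathEnd_cons_false, ih (hx.sub_single j),
        ← hF _ (hx.sub_single j), sub_add_cancel]
      ring
    · rw [trapSum_cons_true, pathEnd_cons_true, ih (hx.add_single j), ← hF _ hx]
      ring

theorem IsDiscretePotential.discreteConservative {F : (Fin d → ℝ) → ℝ}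
    (hF : IsDiscretePotential a h f F) : DiscreteConservative d a h f := fun x hx γ hγ => by
  rw [hF.trapSum_eq_sub hx, hγ, sub_self]

/-- The `(i, j)` component of the discrete curl at `x`, in any dimension: `1/h²` times the
trapezoidal sum over the boundary of the square with vertex `x` spanned by `h e_i` and `h e_j`,
leaving `x` in direction `e_i`. -/
noncomputable def curlhComponent (h : ℝ) (f : (Fin d → ℝ) → Fin d → ℝ) (i j : Fin d)
    (x : Fin d → ℝ) : ℝ :=
  1 / h ^ 2 * (trapEdge h f x i + trapEdge h f (x + Pi.single i h) j
    - trapEdge h f (x + Pi.single j h) i - trapEdge h f x j)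

theorem curlhComponent_eq_zero_iff (hh : h ≠ 0) {i j : Fin d} :
    curlhComponent h f i j x = 0 ↔
      trapEdge h f x i + trapEdge h f (x + Pi.single i h) j =
        trapEdge h f x j + trapEdge h f (x + Pi.single j h) i := by
  rw [curlhComponent, mul_eq_zero_iff_left (by positivity), sub_sub, sub_eq_zero,
    add_comm (trapEdge h f x j)]

theorem curlhComponent_self (h : ℝ) (f : (Fin d → ℝ) → Fin d → ℝ) (i : Fin d)
    (x : Fin d → ℝ) : curlhComponent h f i i x = 0 := by
  simp [curlhComponent]

theorem curlhComponent_swap (h : ℝ) (f : (Fin d → ℝ) → Fin d → ℝ) (i j : Fin d)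
    (x : Fin d → ℝ) : curlhComponent h f j i x = -curlhComponent h f i j x := by
  simp only [curlhComponent]
  ring

theorem DiscreteConservative.curlhComponent_eq_zero (hf : DiscreteConservative d a h f)
    (hx : InGrid d a h x) (i j : Fin d) : curlhComponent h f i j x = 0 := by
  have h_corner : x + Pi.single i h + Pi.single j h - Pi.single i h = x + Pi.single j h := by
    abel
  have h_square := hf x hx [(i, true), (j, true), (i, false), (j, false)] (by
    simp only [pathEnd_cons_true, pathEnd_cons_false, pathEnd_nil, h_corner,
      add_sub_cancel_right])
  simp only [trapSum_cons_true, trapSum_cons_false, trapSum_nil, h_corner,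
    add_sub_cancel_right] at h_square
  rw [curlhComponent]
  linear_combination 1 / h ^ 2 * h_square

theorem exists_isDiscretePotential (hh : h ≠ 0)
    (hf : ∀ x, InGrid d a h x → ∀ i j, curlhComponent h f i j x = 0) :
    ∃ F, IsDiscretePotential a h f F := by
  obtain ⟨φ, hφ⟩ := exists_potential_of_closed (fun k => trapEdge h f (gridPoint a h k))
    fun k i j => by
      simpa only [gridPoint_add_single] using
        (curlhComponent_eq_zero_iff hh).1 (hf _ (inGrid_gridPoint a h k) i j)
  refine ⟨Function.extend (gridPoint a h) φ 0, fun x hx j => ?_⟩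
  obtain ⟨k, rfl⟩ := hx.exists_gridPoint_eq
  have h_inj := gridPoint_injective a hh
  rw [← gridPoint_add_single, h_inj.extend_apply, h_inj.extend_apply, hφ]

theorem curlhComponent_zero_one (h : ℝ) (f : (Fin 2 → ℝ) → Fin 2 → ℝ) (x : Fin 2 → ℝ) :
    curlhComponent h f 0 1 x = curlh h f x := by
  have add_single_zero (y : Fin 2 → ℝ) : y + Pi.single 0 h = ![y 0 + h, y 1] := by
    ext i; fin_cases i <;> simp
  have add_single_one (y : Fin 2 → ℝ) : y + Pi.single 1 h = ![y 0, y 1 + h] := by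
    ext i; fin_cases i <;> simp
  simp only [curlhComponent, curlh, trapEdge, add_single_zero, add_single_one,
    Matrix.cons_val_zero, Matrix.cons_val_one]
  field_simp
  ring

theorem forall_curlhComponent_eq_zero_iff (h : ℝ) (f : (Fin 2 → ℝ) → Fin 2 → ℝ)
    (x : Fin 2 → ℝ) : (∀ i j, curlhComponent h f i j x = 0) ↔ curlh h f x = 0 := by
  simp [Fin.forall_fin_two, curlhComponent_self, curlhComponent_swap h f 0 1,
    curlhComponent_zero_one]

end DiscretePaths

theorem discreteConservative_iff_curlh_eq_zero_general {d : ℕ} (a : Fin d → ℝ) {h : ℝ}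
    (hh : h ≠ 0) (f : (Fin d → ℝ) → Fin d → ℝ) :
    DiscreteConservative d a h f ↔
      ∀ x, InGrid d a h x → ∀ i j, curlhComponent h f i j x = 0 := by
  refine ⟨fun hf x hx => hf.curlhComponent_eq_zero hx, fun hf => ?_⟩
  obtain ⟨F, hF⟩ := exists_isDiscretePotential hh hf
  exact hF.discreteConservative

/-- A planar vector field on the grid `G(a,h)` is discrete conservative if and only if
its discrete curl vanishes at every grid point. -/
theorem discreteConservative_iff_curlh_eq_zero
    (a : Fin 2 → ℝ) (h : ℝ) (hh : 0 < h)
    (f : (Fin 2 → ℝ) → Fin 2 → ℝ) :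
    DiscreteConservative 2 a h f ↔ ∀ x, InGrid 2 a h x → curlh h f x = 0 := by
  simp only [discreteConservative_iff_curlh_eq_zero_general a hh.ne',
    forall_curlhComponent_eq_zero_iff]
end

section
/- Discrete curl bound for a gradient field. Let g ∈ C³(ℝ²), h > 0, x = (x¹, x²) ∈ ℝ², and let E = [x¹, x¹+h] × [x², x²+h]. Define (curl_h ∇g)(x) := (1/(2h)) { D₁g(x¹,x²) + D₁g(x¹+h,x²) + D₂g(x¹+h,x²) + D₂g(x¹+h,x²+h) − D₁g(x¹+h,x²+h) − D₁g(x¹,x²+h) − D₂g(x¹,x²+h) − D₂g(x¹,x²) }, where D₁, D₂ are the partial derivatives. Then |(curl_h ∇g)(x)| ≤ (1/6) h ε_E, where ε_E := sup_{u, v ∈ E} max( |D₁³g(u) − D₁³g(v)|, |D₂³g(u) − D₂³g(v)| ) and D₁³g = ∂³g/∂(x¹)³, D₂³g = ∂³g/∂(x²)³. -/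
/- Discrete curl bound for a gradient field. -/

/-- The partial derivative of `g : ℝ² → ℝ` in the `j`-th coordinate direction. -/
noncomputable def pderiv2 (j : Fin 2) (g : (Fin 2 → ℝ) → ℝ) : (Fin 2 → ℝ) → ℝ :=
  fun x => fderiv ℝ g x (Pi.single j 1)

/-!
Write `φ` for the difference of `g` along the bottom and the top edge of `E`, and `ψ` for the
difference along the right and the left edge. The discrete curl is then the sum of the trapezoidal
approximations of `∫ φ'` and `∫ ψ'`, up to the factor `1 / h ^ 2`. The exact integrals are boundary
terms, and they cancel because the circulation of a gradient vanishes. What remains are two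
trapezoidal errors, which are controlled by `φ'''` and `ψ'''`, that is, by differences of `D_j³ g`
at opposite points of the square.
-/

open Set

section TrapezoidalRule

variable {F : Type*} [NormedAddCommGroup F] [NormedSpace ℝ F] {a b C : ℝ}

theorem norm_le_mul_pow_succ_of_norm_deriv_le_mul_pow {f f' : ℝ → F} {n : ℕ}
    (hf : ∀ t ∈ Icc a b, HasDerivWithinAt f (f' t) (Icc a b) t) (hfa : f a = 0)
    (hf' : ∀ t ∈ Icc a b, ‖f' t‖ ≤ C * (t - a) ^ n) :
    ∀ t ∈ Icc a b, ‖f t‖ ≤ C / (n + 1) * (t - a) ^ (n + 1) := by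
  have hB (t : ℝ) :
      HasDerivAt (fun t => C / (n + 1) * (t - a) ^ (n + 1)) (C * (t - a) ^ n) t := by
    refine ((((hasDerivAt_id t).sub_const a).pow (n + 1)).const_mul _).congr_deriv ?_
    simp [field]
  exact fun t ht => image_norm_le_of_norm_deriv_right_le_deriv_boundary
    (fun t ht => (hf t ht).continuousWithinAt)
    (fun t ht => (hf t (Ico_subset_Icc_self ht)).mono_of_mem_nhdsWithin
      (Icc_mem_nhdsGE_of_mem ht))
    (by simp [hfa]) hB (fun t ht => hf' t (Ico_subset_Icc_self ht)) ht

theorem norm_trapezoid_sub_le {f f₁ f₂ f₃ : ℝ → F} (hab : a ≤ b)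
    (hf : ∀ t ∈ Icc a b, HasDerivWithinAt f (f₁ t) (Icc a b) t)
    (hf₁ : ∀ t ∈ Icc a b, HasDerivWithinAt f₁ (f₂ t) (Icc a b) t)
    (hf₂ : ∀ t ∈ Icc a b, HasDerivWithinAt f₂ (f₃ t) (Icc a b) t)
    (hC : ∀ t ∈ Icc a b, ‖f₃ t‖ ≤ C) :
    ‖(b - a) • (f₁ a + f₁ b) - (2 : ℝ) • (f b - f a)‖ ≤ C / 6 * (b - a) ^ 3 := by
  let R (t : ℝ) : F := (t - a) • (f₁ a + f₁ t) - (2 : ℝ) • (f t - f a)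
  let R' (t : ℝ) : F := (t - a) • f₂ t - (f₁ t - f₁ a)
  have hR (t) (ht : t ∈ Icc a b) : HasDerivWithinAt R (R' t) (Icc a b) t := by
    refine ((((hasDerivWithinAt_id t _).sub_const a).smul ((hf₁ t ht).const_add _)).sub
      (((hf t ht).sub_const _).const_smul (2 : ℝ))).congr_deriv ?_
    simp only [R', id_eq]
    module
  have hR' (t) (ht : t ∈ Icc a b) : HasDerivWithinAt R' ((t - a) • f₃ t) (Icc a b) t := by
    refine ((((hasDerivWithinAt_id t _).sub_const a).smul (hf₂ t ht)).sub
      ((hf₁ t ht).sub_const _)).congr_deriv ?_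
    simp only [id_eq]
    module
  have hR'' (t) (ht : t ∈ Icc a b) : ‖(t - a) • f₃ t‖ ≤ C * (t - a) ^ 1 := by
    have hta : 0 ≤ t - a := sub_nonneg.2 ht.1
    rw [norm_smul, Real.norm_of_nonneg hta, pow_one, mul_comm]
    exact mul_le_mul_of_nonneg_right (hC t ht) hta
  have hR'_le := norm_le_mul_pow_succ_of_norm_deriv_le_mul_pow hR' (by simp [R']) hR''
  have hR_le := norm_le_mul_pow_succ_of_norm_deriv_le_mul_pow hR (by simp [R]) hR'_le
  refine (hR_le b (right_mem_Icc.2 hab)).trans_eq ?_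
  push_cast
  ring

end TrapezoidalRule

/-- The joint oscillation of two real functions on `s`. The quantity `ε_E` of the discrete curl
bound is the joint oscillation of `D₁³ g` and `D₂³ g` on `E`. As a supremum of reals, it is `0` when
the differences are unbounded. -/
noncomputable def jointOscillation {X : Type*} (A B : X → ℝ) (s : Set X) : ℝ :=
  sSup {c : ℝ | ∃ u ∈ s, ∃ v ∈ s, c = max |A u - A v| |B u - B v|}

theorem max_abs_sub_le_jointOscillation {X : Type*} {A B : X → ℝ} {s : Set X}
    (hA : Bornology.IsBounded (A '' s)) (hB : Bornology.IsBounded (B '' s))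
    {u v : X} (hu : u ∈ s) (hv : v ∈ s) :
    max |A u - A v| |B u - B v| ≤ jointOscillation A B s := by
  refine le_csSup ⟨max (Metric.diam (A '' s)) (Metric.diam (B '' s)), ?_⟩ ⟨u, hu, v, hv, rfl⟩
  rintro _ ⟨y, hy, z, hz, rfl⟩
  exact max_le_max
    (Metric.dist_le_diam_of_mem hA (mem_image_of_mem A hy) (mem_image_of_mem A hz))
    (Metric.dist_le_diam_of_mem hB (mem_image_of_mem B hy) (mem_image_of_mem B hz))

theorem add_smul_mem_of_ordConnected {V : Type*} [AddCommGroup V] [PartialOrder V]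
    [IsOrderedAddMonoid V] [Module ℝ V] [SMulPosMono ℝ V] {s : Set V} (hs : s.OrdConnected)
    {p v : V} (hv : 0 ≤ v) {h t : ℝ} (hp : p ∈ s) (hp' : p + h • v ∈ s) (ht : t ∈ Icc 0 h) :
    p + t • v ∈ s := by
  have htv : 0 ≤ t • v := by simpa using smul_le_smul_of_nonneg_right ht.1 hv
  exact hs.out hp hp' ⟨le_add_of_nonneg_right htv,
    add_le_add_right (smul_le_smul_of_nonneg_right ht.2 hv) p⟩

section PartialDerivatives

variable {f : (Fin 2 → ℝ) → ℝ} (j : Fin 2)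

theorem contDiff_iterate_pderiv2 {m n k : ℕ} (hmk : m + k ≤ n) (hf : ContDiff ℝ n f) :
    ContDiff ℝ m ((pderiv2 j)^[k] f) := by
  induction k generalizing m with
  | zero => exact hf.of_le (by exact_mod_cast hmk)
  | succ k ih =>
    rw [Function.iterate_succ_apply']
    exact ((ih (m := m + 1) (by lia)).fderiv_right (by norm_cast)).clm_apply contDiff_const

theorem hasDerivAt_comp_add_smul_single {p : Fin 2 → ℝ} {t : ℝ}
    (hf : DifferentiableAt ℝ f (p + t • Pi.single j 1)) :
    HasDerivAt (fun t : ℝ => f (p + t • Pi.single j 1))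
      (pderiv2 j f (p + t • Pi.single j 1)) t := by
  have hline : HasDerivAt (fun t : ℝ => p + t • (Pi.single j 1 : Fin 2 → ℝ)) (Pi.single j 1) t := by
    simpa using ((hasDerivAt_id t).smul_const (Pi.single j 1 : Fin 2 → ℝ)).const_add p
  exact hf.hasFDerivAt.comp_hasDerivAt t hline

theorem abs_trapezoid_opposite_edges_sub_le {s : Set (Fin 2 → ℝ)} (hs : s.OrdConnected)
    {p p' q q' : Fin 2 → ℝ} {h C : ℝ} (hh : 0 ≤ h)
    (hp : p ∈ s) (hp' : p' ∈ s) (hq : q ∈ s) (hq' : q' ∈ s)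
    (hpp' : p + h • Pi.single j 1 = p') (hqq' : q + h • Pi.single j 1 = q')
    (hf : ∀ k < 3, ∀ y ∈ s, DifferentiableAt ℝ ((pderiv2 j)^[k] f) y)
    (hC : ∀ u ∈ s, ∀ v ∈ s, |(pderiv2 j)^[3] f u - (pderiv2 j)^[3] f v| ≤ C) :
    |h * (pderiv2 j f p + pderiv2 j f p' - (pderiv2 j f q + pderiv2 j f q'))
        - 2 * (f p' - f p - (f q' - f q))|
      ≤ C / 6 * h ^ 3 := by
  subst hpp' hqq'
  let φ (k : ℕ) (t : ℝ) : ℝ :=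
    (pderiv2 j)^[k] f (p + t • Pi.single j 1) - (pderiv2 j)^[k] f (q + t • Pi.single j 1)
  have he : (0 : Fin 2 → ℝ) ≤ Pi.single j 1 := Pi.single_nonneg.2 zero_le_one
  have hpt (t) (ht : t ∈ Icc 0 h) := add_smul_mem_of_ordConnected hs he hp hp' ht
  have hqt (t) (ht : t ∈ Icc 0 h) := add_smul_mem_of_ordConnected hs he hq hq' ht
  have hφ (k) (hk : k < 3) (t) (ht : t ∈ Icc 0 h) :
      HasDerivWithinAt (φ k) (φ (k + 1) t) (Icc 0 h) t := by
    simp only [φ, Function.iterate_succ_apply']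
    exact ((hasDerivAt_comp_add_smul_single j (hf k hk _ (hpt t ht))).sub
      (hasDerivAt_comp_add_smul_single j (hf k hk _ (hqt t ht)))).hasDerivWithinAt
  have htrap := norm_trapezoid_sub_le hh (hφ 0 (by lia)) (hφ 1 (by lia)) (hφ 2 (by lia))
    fun t ht => hC _ (hpt t ht) _ (hqt t ht)
  simp only [φ, Function.iterate_succ_apply, Function.iterate_zero_apply, zero_smul, add_zero,
    sub_zero, smul_eq_mul, Real.norm_eq_abs, zero_add] at htrap
  convert htrap using 2
  ring

end PartialDerivatives

theorem add_smul_single_zero_eq (p : Fin 2 → ℝ) (t : ℝ) :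
    p + t • Pi.single 0 1 = ![p 0 + t, p 1] := by
  ext i; fin_cases i <;> simp

theorem add_smul_single_one_eq (p : Fin 2 → ℝ) (t : ℝ) :
    p + t • Pi.single 1 1 = ![p 0, p 1 + t] := by
  ext i; fin_cases i <;> simp

/-- The discrete curl `curl_h ∇g` of a gradient field at `x`: the trapezoidal circulation of `∇g`
around the square with lower left corner `x` and side `h`, divided by `h ^ 2`. -/
noncomputable def discreteCurlGrad (g : (Fin 2 → ℝ) → ℝ) (h : ℝ) (x : Fin 2 → ℝ) : ℝ :=
  1 / (2 * h) *
    (pderiv2 0 g x + pderiv2 0 g ![x 0 + h, x 1] + pderiv2 1 g ![x 0 + h, x 1]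
      + pderiv2 1 g ![x 0 + h, x 1 + h] - pderiv2 0 g ![x 0 + h, x 1 + h]
      - pderiv2 0 g ![x 0, x 1 + h] - pderiv2 1 g ![x 0, x 1 + h] - pderiv2 1 g x)

-- The increments of `g` along the four edges, which the trapezoidal rule calls for, cancel.
theorem two_mul_sq_mul_discreteCurlGrad_eq (g : (Fin 2 → ℝ) → ℝ) (h : ℝ)
    (x : Fin 2 → ℝ) :
    2 * h ^ 2 * discreteCurlGrad g h x =
      (h * (pderiv2 0 g x + pderiv2 0 g ![x 0 + h, x 1]
          - (pderiv2 0 g ![x 0, x 1 + h] + pderiv2 0 g ![x 0 + h, x 1 + h]))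
        - 2 * (g ![x 0 + h, x 1] - g x - (g ![x 0 + h, x 1 + h] - g ![x 0, x 1 + h])))
      + (h * (pderiv2 1 g ![x 0 + h, x 1] + pderiv2 1 g ![x 0 + h, x 1 + h]
          - (pderiv2 1 g x + pderiv2 1 g ![x 0, x 1 + h]))
        - 2 * (g ![x 0 + h, x 1 + h] - g ![x 0 + h, x 1] - (g ![x 0, x 1 + h] - g x))) := by
  rw [discreteCurlGrad]
  field_simp
  ring

theorem abs_discreteCurlGrad_le {g : (Fin 2 → ℝ) → ℝ} {h C : ℝ} (hh : 0 < h) {x : Fin 2 → ℝ}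
    (hg : ∀ j, ∀ k < 3, ∀ y ∈ Icc x (fun i => x i + h),
      DifferentiableAt ℝ ((pderiv2 j)^[k] g) y)
    (hC : ∀ j, ∀ u ∈ Icc x (fun i => x i + h), ∀ v ∈ Icc x (fun i => x i + h),
      |(pderiv2 j)^[3] g u - (pderiv2 j)^[3] g v| ≤ C) :
    |discreteCurlGrad g h x| ≤ 1 / 6 * h * C := by
  have hx : x ∈ Icc x (fun i => x i + h) := by simp [Pi.le_def, hh.le]
  have hx₁ : ![x 0 + h, x 1] ∈ Icc x (fun i => x i + h) := by simp [Pi.le_def, hh.le]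
  have hx₂ : ![x 0, x 1 + h] ∈ Icc x (fun i => x i + h) := by simp [Pi.le_def, hh.le]
  have hx₁₂ : ![x 0 + h, x 1 + h] ∈ Icc x (fun i => x i + h) := by simp [Pi.le_def, hh.le]
  have hbottom_top := abs_trapezoid_opposite_edges_sub_le 0 ordConnected_Icc hh.le hx hx₁ hx₂ hx₁₂
    (add_smul_single_zero_eq _ _) (add_smul_single_zero_eq _ _) (hg 0) (hC 0)
  have hright_left := abs_trapezoid_opposite_edges_sub_le 1 ordConnected_Icc hh.le hx₁ hx₁₂ hx hx₂
    (add_smul_single_one_eq _ _) (add_smul_single_one_eq _ _) (hg 1) (hC 1)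
  calc |discreteCurlGrad g h x|
      = |2 * h ^ 2 * discreteCurlGrad g h x| / (2 * h ^ 2) := by
        rw [abs_mul, abs_of_pos (by positivity : 0 < 2 * h ^ 2)]
        field_simp
    _ ≤ (C / 6 * h ^ 3 + C / 6 * h ^ 3) / (2 * h ^ 2) := by
        gcongr
        rw [two_mul_sq_mul_discreteCurlGrad_eq g h x]
        exact (abs_add_le _ _).trans (add_le_add hbottom_top hright_left)
    _ = 1 / 6 * h * C := by
        field_simp
        ring

theorem discrete_curl_grad_bound_general
    (g : (Fin 2 → ℝ) → ℝ) (h : ℝ) (hh : 0 < h) (x : Fin 2 → ℝ)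
    (hg : ∀ j, ∀ k < 3, ∀ y ∈ Icc x (fun i => x i + h),
      DifferentiableAt ℝ ((pderiv2 j)^[k] g) y)
    (hbdd : ∀ j, Bornology.IsBounded ((pderiv2 j)^[3] g '' Icc x (fun i => x i + h))) :
    |discreteCurlGrad g h x| ≤ 1 / 6 * h *
      jointOscillation ((pderiv2 0)^[3] g) ((pderiv2 1)^[3] g) (Icc x (fun i => x i + h)) := by
  have hosc {u v} (hu : u ∈ Icc x (fun i => x i + h)) (hv : v ∈ Icc x (fun i => x i + h)) :=
    max_le_iff.1 (max_abs_sub_le_jointOscillation (hbdd 0) (hbdd 1) hu hv)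
  exact abs_discreteCurlGrad_le hh hg <| Fin.forall_fin_two.2
    ⟨fun _ hu _ hv => (hosc hu hv).1, fun _ hu _ hv => (hosc hu hv).2⟩

/-- **Discrete curl bound for a gradient field.**  For `g ∈ C³(ℝ²)`, the discrete curl
`curl_h ∇g` over the elementary square `E = [x¹, x¹+h] × [x², x²+h]` is bounded by
`(1/6) h ε_E`, where `ε_E` is the supremum over `u, v ∈ E` of
`max(|D₁³g(u) − D₁³g(v)|, |D₂³g(u) − D₂³g(v)|)`. -/
theorem discrete_curl_grad_bound
    (g : (Fin 2 → ℝ) → ℝ) (hg : ContDiff ℝ 3 g)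
    (h : ℝ) (hh : 0 < h) (x : Fin 2 → ℝ) :
    |1 / (2 * h) *
        (pderiv2 0 g x + pderiv2 0 g ![x 0 + h, x 1] + pderiv2 1 g ![x 0 + h, x 1]
          + pderiv2 1 g ![x 0 + h, x 1 + h] - pderiv2 0 g ![x 0 + h, x 1 + h]
          - pderiv2 0 g ![x 0, x 1 + h] - pderiv2 1 g ![x 0, x 1 + h] - pderiv2 1 g x)|
      ≤ 1 / 6 * h *
        sSup {c : ℝ | ∃ u ∈ Set.Icc x (fun i => x i + h), ∃ v ∈ Set.Icc x (fun i => x i + h),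
          c = max |pderiv2 0 (pderiv2 0 (pderiv2 0 g)) u - pderiv2 0 (pderiv2 0 (pderiv2 0 g)) v|
                  |pderiv2 1 (pderiv2 1 (pderiv2 1 g)) u - pderiv2 1 (pderiv2 1 (pderiv2 1 g)) v|} :=
  discrete_curl_grad_bound_general g h hh x
    (fun j _ hk y _ =>
      (contDiff_iterate_pderiv2 (m := 1) j (by lia) hg).differentiable one_ne_zero y)
    fun j => (isCompact_Icc.image (contDiff_iterate_pderiv2 j le_rfl hg).continuous).isBounded
end

section
/- Boundary formula for the error between a grid sum and the integral of the piecewise-linear interpolation (identity from the proof of Lemma A.1). Let h > 0, n ≥ 1, x_i = x_0 + ih and y_j = y_0 + jh for 0 ≤ i, j ≤ n, and let f be a real-valued function defined on the grid points (x_i, y_j). Let f̄ be the piecewise-linear interpolation of f on the grid triangles. Set S_n := h² Σ_{i=1}^{n} Σ_{j=1}^{n} f(x_{i−1}, y_{j−1}) and T_n := ∫_{[x_0, x_n) × [y_0, y_n)} f̄(x,y) dx dy. Then T_n − S_n = (h²/2) Σ_{i=1}^{n−1} { f(x_i, y_n) + f(x_n, y_i) − f(x_0, y_i) − f(x_i,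 y_0) } + (h²/6) { 2 f(x_0, y_n) + 2 f(x_n, y_0) + f(x_n, y_n) − 5 f(x_0, y_0) }. -/
/- Boundary formula for the error between a grid sum and the integral of the
piecewise-linear interpolation (identity from the proof of Lemma A.1). -/

open MeasureTheory

/-- The piecewise-linear interpolation of grid values `f : ℤ → ℤ → ℝ` (value `f i j` at
the grid point `(x₀ + i h, y₀ + j h)`) on the triangles of the grid of mesh `h`:
on the lower triangle (where `s + t ≤ 1`, with `s, t` the local coordinates) it is the
affine function with the values of `f` at the three vertices
`(x_i, y_j), (x_i + h, y_j), (x_i, y_j + h)`, and on the upper triangle the affine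
function with the values of `f` at `(x_i + h, y_j), (x_i, y_j + h), (x_i + h, y_j + h)`. -/
noncomputable def gridInterp (h x₀ y₀ : ℝ) (f : ℤ → ℤ → ℝ) (p : ℝ × ℝ) : ℝ :=
  let i : ℤ := ⌊(p.1 - x₀) / h⌋
  let j : ℤ := ⌊(p.2 - y₀) / h⌋
  let s : ℝ := (p.1 - x₀) / h - i
  let t : ℝ := (p.2 - y₀) / h - j
  if s + t ≤ 1 then
    f i j + s * (f (i + 1) j - f i j) + t * (f i (j + 1) - f i j)
  else
    f (i + 1) (j + 1) + (1 - s) * (f i (j + 1) - f (i + 1) (j + 1))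
      + (1 - t) * (f (i + 1) j - f (i + 1) (j + 1))

/-!
On a single cell the interpolation is the affine function of the upper triangle plus the multiple
`(A - B - C + D) * max 0 (1 - s - t)` of a hat that vanishes there. The cell therefore contributes
`h ^ 2 / 6 * (A + 2 * B + 2 * C + D)` to the integral, where `A, B, C, D` are the values at the
corners `(0, 0), (1, 0), (0, 1), (1, 1)`; the second and third corners lie on both triangles.
Every interior grid point is a corner of four cells, with weights adding up to `6`, so once
the grid sum is subtracted only grid points on the boundary keep a nonzero coefficient.
-/

section Floor

variable {K : Type*} [Field K] [LinearOrder K] [IsStrictOrderedRing K] [FloorRing K] {h : K}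

lemma floor_sub_div_eq_iff (hh : 0 < h) (a x : K) (k : ℤ) :
    ⌊(x - a) / h⌋ = k ↔ x ∈ Set.Ico (a + k * h) (a + k * h + h) := by
  rw [Int.floor_eq_iff, le_div_iff₀ hh, div_lt_iff₀ hh, Set.mem_Ico]
  constructor <;> rintro ⟨h₁, h₂⟩ <;> constructor <;> linarith

lemma mem_Ico_add_mul_iff_exists_floor (hh : 0 < h) (a x : K) (n : ℕ) :
    x ∈ Set.Ico a (a + n * h) ↔ ∃ i ∈ Finset.range n, ⌊(x - a) / h⌋ = (i : ℤ) := by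
  have floor_bounds : x ∈ Set.Ico a (a + n * h) ↔ 0 ≤ ⌊(x - a) / h⌋ ∧ ⌊(x - a) / h⌋ < (n : ℤ) := by
    rw [Int.floor_nonneg, Int.floor_lt, le_div_iff₀ hh, div_lt_iff₀ hh, zero_mul, sub_nonneg,
      sub_lt_iff_lt_add', Int.cast_natCast, Set.mem_Ico]
  rw [floor_bounds]
  constructor
  · rintro ⟨h₀, hn⟩
    lift ⌊(x - a) / h⌋ to ℕ using h₀ with i
    exact ⟨i, Finset.mem_range.2 (mod_cast hn), rfl⟩
  · rintro ⟨i, hi, hx⟩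
    rw [hx]
    exact ⟨i.cast_nonneg, mod_cast Finset.mem_range.1 hi⟩

end Floor

section Cells

variable {h : ℝ}

/-- The half-open cell `[x_i, x_i + h) × [y_j, y_j + h)` of the grid of mesh `h` based at
`(x₀, y₀)`. Half-open cells are exactly the level sets of the floors that select the affine
pieces of `gridInterp`, so they tile the domain without overlap. -/
def gridCell (h x₀ y₀ : ℝ) (i j : ℤ) : Set (ℝ × ℝ) :=
  Set.Ico (x₀ + i * h) (x₀ + i * h + h) ×ˢ Set.Ico (y₀ + j * h) (y₀ + j * h + h)

lemma mem_gridCell_iff_floor (hh : 0 < h) {x₀ y₀ : ℝ} {i j : ℤ} {p : ℝ × ℝ} :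
    p ∈ gridCell h x₀ y₀ i j ↔ ⌊(p.1 - x₀) / h⌋ = i ∧ ⌊(p.2 - y₀) / h⌋ = j := by
  rw [gridCell, Set.mem_prod, floor_sub_div_eq_iff hh, floor_sub_div_eq_iff hh]

lemma measurableSet_gridCell (h x₀ y₀ : ℝ) (i j : ℤ) : MeasurableSet (gridCell h x₀ y₀ i j) :=
  measurableSet_Ico.prod measurableSet_Ico

lemma pairwise_disjoint_gridCell (hh : 0 < h) (x₀ y₀ : ℝ) :
    Pairwise (Function.onFun Disjoint fun q : ℤ × ℤ ↦ gridCell h x₀ y₀ q.1 q.2) := by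
  refine fun q r hqr ↦ Set.disjoint_left.2 fun p hq hr ↦ hqr ?_
  rw [mem_gridCell_iff_floor hh] at hq hr
  exact Prod.ext (hq.1.symm.trans hr.1) (hq.2.symm.trans hr.2)

lemma biUnion_gridCell (hh : 0 < h) (x₀ y₀ : ℝ) (m n : ℕ) :
    ⋃ q ∈ Finset.range m ×ˢ Finset.range n, gridCell h x₀ y₀ q.1 q.2 =
      Set.Ico x₀ (x₀ + m * h) ×ˢ Set.Ico y₀ (y₀ + n * h) := by
  ext p
  simp only [Set.mem_iUnion, Set.mem_prod, mem_gridCell_iff_floor hh,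
    mem_Ico_add_mul_iff_exists_floor hh, Finset.mem_product, exists_prop, Prod.exists]
  grind

lemma integrableOn_gridCell_of_continuous {E : Type*} [NormedAddCommGroup E] {F : ℝ × ℝ → E}
    (hF : Continuous F) (h x₀ y₀ : ℝ) (i j : ℤ) : IntegrableOn F (gridCell h x₀ y₀ i j) :=
  (hF.continuousOn.integrableOn_compact (isCompact_Icc.prod isCompact_Icc)).mono_set
    (Set.prod_mono Set.Ico_subset_Icc_self Set.Ico_subset_Icc_self)

variable {E : Type*} [NormedAddCommGroup E] [NormedSpace ℝ E]

lemma setIntegral_eq_sum_gridCell (hh : 0 < h) (x₀ y₀ : ℝ) (m n : ℕ) {F : ℝ × ℝ → E}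
    (hF : ∀ i < m, ∀ j < n, IntegrableOn F (gridCell h x₀ y₀ i j)) :
    ∫ p in Set.Ico x₀ (x₀ + m * h) ×ˢ Set.Ico y₀ (y₀ + n * h), F p =
      ∑ i ∈ Finset.range m, ∑ j ∈ Finset.range n, ∫ p in gridCell h x₀ y₀ i j, F p := by
  have cast_injective : Function.Injective (Prod.map Nat.cast Nat.cast : ℕ × ℕ → ℤ × ℤ) :=
    Nat.cast_injective.prodMap Nat.cast_injective
  have hdisj := (pairwise_disjoint_gridCell hh x₀ y₀).comp_of_injective cast_injective
  have hint : ∀ q ∈ Finset.range m ×ˢ Finset.range n,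
      IntegrableOn F (gridCell h x₀ y₀ q.1 q.2) := by
    intro q hq
    rw [Finset.mem_product, Finset.mem_range, Finset.mem_range] at hq
    exact hF q.1 hq.1 q.2 hq.2
  rw [← biUnion_gridCell hh, integral_biUnion_finset
    (s := fun q : ℕ × ℕ ↦ gridCell h x₀ y₀ q.1 q.2) _
    (fun q _ ↦ measurableSet_gridCell h x₀ y₀ q.1 q.2) (hdisj.set_pairwise _) hint,
    Finset.sum_product]

lemma setIntegral_Ico_comp_sub_div_sub (hh : 0 < h) (a : ℝ) (k : ℤ) (F : ℝ → E) :
    ∫ x in Set.Ico (a + k * h) (a + k * h + h), F ((x - a) / h - k) =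
      h • ∫ s in (0 : ℝ)..1, F s := by
  rw [integral_Ico_eq_integral_Ioc, ← intervalIntegral.integral_of_le (by linarith),
    intervalIntegral.integral_comp_sub_right (fun x ↦ F (x / h - k)) a,
    intervalIntegral.integral_comp_div_sub _ hh.ne']
  congr 2 <;> field_simp <;> ring

lemma setIntegral_gridCell_comp_localCoords (hh : 0 < h) (x₀ y₀ : ℝ) (i j : ℤ)
    {F : ℝ → ℝ → E} (hF : Continuous (Function.uncurry F)) :
    ∫ p in gridCell h x₀ y₀ i j, F ((p.1 - x₀) / h - i) ((p.2 - y₀) / h - j) =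
      h ^ 2 • ∫ s in (0 : ℝ)..1, ∫ t in (0 : ℝ)..1, F s t := by
  have hcont : Continuous fun p : ℝ × ℝ ↦ F ((p.1 - x₀) / h - i) ((p.2 - y₀) / h - j) :=
    hF.comp (by fun_prop : Continuous fun p : ℝ × ℝ ↦ ((p.1 - x₀) / h - i, (p.2 - y₀) / h - j))
  have hint := integrableOn_gridCell_of_continuous hcont h x₀ y₀ i j
  rw [gridCell, Measure.volume_eq_prod] at hint ⊢
  rw [setIntegral_prod _ hint]
  simp only [setIntegral_Ico_comp_sub_div_sub hh y₀ j (F _)]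
  rw [setIntegral_Ico_comp_sub_div_sub hh x₀ i fun s ↦ h • ∫ t in (0 : ℝ)..1, F s t,
    intervalIntegral.integral_smul, smul_smul, sq]

end Cells

section UnitCell

/-- The piecewise-linear interpolation on the unit square, cut along `s + t = 1`, of the corner
values `A` at `(0, 0)`, `B` at `(1, 0)`, `C` at `(0, 1)` and `D` at `(1, 1)`. It is written without
a case distinction, so that its continuity is evident. -/
def cellInterp (A B C D s t : ℝ) : ℝ :=
  D + (1 - s) * (C - D) + (1 - t) * (B - D) + (A - B - C + D) * max 0 (1 - s - t)

lemma cellInterp_of_add_le_one (A B C D : ℝ) {s t : ℝ} (hst : s + t ≤ 1) :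
    cellInterp A B C D s t = A + s * (B - A) + t * (C - A) := by
  rw [cellInterp, max_eq_right (by linarith)]
  ring

lemma cellInterp_of_one_le_add (A B C D : ℝ) {s t : ℝ} (hst : 1 ≤ s + t) :
    cellInterp A B C D s t = D + (1 - s) * (C - D) + (1 - t) * (B - D) := by
  rw [cellInterp, max_eq_left (by linarith), mul_zero, add_zero]

lemma continuous_uncurry_cellInterp (A B C D : ℝ) :
    Continuous (Function.uncurry (cellInterp A B C D)) := by
  unfold Function.uncurry cellInterp
  fun_prop

lemma integral_max_zero_sub {r b : ℝ} (hr : 0 ≤ r) (hrb : r ≤ b) :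
    ∫ t in (0 : ℝ)..b, max 0 (r - t) = r ^ 2 / 2 := by
  have hcont : Continuous fun t : ℝ ↦ max 0 (r - t) := by fun_prop
  have left : ∫ t in (0 : ℝ)..r, max 0 (r - t) = ∫ t in (0 : ℝ)..r, (r - t) := by
    refine intervalIntegral.integral_congr fun t ht ↦ max_eq_right ?_
    rw [Set.uIcc_of_le hr] at ht
    exact sub_nonneg.2 ht.2
  have right : ∫ t in r..b, max 0 (r - t) = ∫ _ in r..b, (0 : ℝ) := by
    refine intervalIntegral.integral_congr fun t ht ↦ max_eq_left ?_
    rw [Set.uIcc_of_le hrb] at ht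
    exact sub_nonpos.2 ht.1
  rw [← intervalIntegral.integral_add_adjacent_intervals (hcont.intervalIntegrable 0 r)
    (hcont.intervalIntegrable r b), left, right,
    intervalIntegral.integral_comp_sub_left (fun t ↦ t)]
  simp

lemma integral_cellInterp_right (A B C D : ℝ) {s : ℝ} (hs : s ∈ Set.Icc (0 : ℝ) 1) :
    ∫ t in (0 : ℝ)..1, cellInterp A B C D s t =
      D + (B - D) / 2 + (C - D) * (1 - s) + (A - B - C + D) / 2 * (1 - s) ^ 2 := by
  have hat : ∫ t in (0 : ℝ)..1, max 0 (1 - s - t) = (1 - s) ^ 2 / 2 :=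
    integral_max_zero_sub (sub_nonneg.2 hs.2) (sub_le_self 1 hs.1)
  have slope : ∫ t in (0 : ℝ)..1, (1 - t) = 1 / 2 := by
    rw [intervalIntegral.integral_comp_sub_left (fun t ↦ t)]
    simp
  unfold cellInterp
  rw [intervalIntegral.integral_add (Continuous.intervalIntegrable (by fun_prop) _ _)
      (Continuous.intervalIntegrable (by fun_prop) _ _),
    intervalIntegral.integral_add (Continuous.intervalIntegrable (by fun_prop) _ _)
      (Continuous.intervalIntegrable (by fun_prop) _ _),
    intervalIntegral.integral_const_mul, intervalIntegral.integral_mul_const, hat, slope,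
    intervalIntegral.integral_const]
  simp only [smul_eq_mul]
  ring

lemma integral_quadratic_zero_one (a b c : ℝ) :
    ∫ u in (0 : ℝ)..1, (a + b * u + c * u ^ 2) = a + b / 2 + c / 3 := by
  rw [intervalIntegral.integral_add (Continuous.intervalIntegrable (by fun_prop) _ _)
      (Continuous.intervalIntegrable (by fun_prop) _ _),
    intervalIntegral.integral_add (Continuous.intervalIntegrable (by fun_prop) _ _)
      (Continuous.intervalIntegrable (by fun_prop) _ _),
    intervalIntegral.integral_const_mul, intervalIntegral.integral_const_mul, integral_id,
    integral_pow, intervalIntegral.integral_const, smul_eq_mul]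
  norm_num
  ring

lemma integral_integral_cellInterp (A B C D : ℝ) :
    ∫ s in (0 : ℝ)..1, ∫ t in (0 : ℝ)..1, cellInterp A B C D s t =
      (A + 2 * B + 2 * C + D) / 6 := by
  let G : ℝ → ℝ := fun u ↦ D + (B - D) / 2 + (C - D) * u + (A - B - C + D) / 2 * u ^ 2
  calc ∫ s in (0 : ℝ)..1, ∫ t in (0 : ℝ)..1, cellInterp A B C D s t
      = ∫ s in (0 : ℝ)..1, G (1 - s) :=
        intervalIntegral.integral_congr fun s hs ↦
          integral_cellInterp_right A B C D (by rwa [Set.uIcc_of_le zero_le_one] at hs)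
    _ = ∫ u in (0 : ℝ)..1, G u := by
        rw [intervalIntegral.integral_comp_sub_left G, sub_self, sub_zero]
    _ = (A + 2 * B + 2 * C + D) / 6 := by
        rw [integral_quadratic_zero_one]
        ring

end UnitCell

section GridInterp

variable {h : ℝ}

lemma eqOn_gridInterp_cellInterp (hh : 0 < h) (x₀ y₀ : ℝ) (f : ℤ → ℤ → ℝ) (i j : ℤ) :
    Set.EqOn (gridInterp h x₀ y₀ f)
      (fun p ↦ cellInterp (f i j) (f (i + 1) j) (f i (j + 1)) (f (i + 1) (j + 1))
        ((p.1 - x₀) / h - i) ((p.2 - y₀) / h - j))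
      (gridCell h x₀ y₀ i j) := by
  intro p hp
  obtain ⟨hi, hj⟩ := (mem_gridCell_iff_floor hh).1 hp
  simp only [gridInterp, hi, hj]
  split_ifs with hst
  · exact (cellInterp_of_add_le_one _ _ _ _ hst).symm
  · exact (cellInterp_of_one_le_add _ _ _ _ (not_le.1 hst).le).symm

lemma integrableOn_gridInterp_gridCell (hh : 0 < h) (x₀ y₀ : ℝ) (f : ℤ → ℤ → ℝ) (i j : ℤ) :
    IntegrableOn (gridInterp h x₀ y₀ f) (gridCell h x₀ y₀ i j) := by
  refine IntegrableOn.congr_fun (integrableOn_gridCell_of_continuous ?_ h x₀ y₀ i j)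
    (eqOn_gridInterp_cellInterp hh x₀ y₀ f i j).symm (measurableSet_gridCell h x₀ y₀ i j)
  unfold cellInterp
  fun_prop

lemma setIntegral_gridInterp_gridCell (hh : 0 < h) (x₀ y₀ : ℝ) (f : ℤ → ℤ → ℝ) (i j : ℤ) :
    ∫ p in gridCell h x₀ y₀ i j, gridInterp h x₀ y₀ f p =
      h ^ 2 / 6 * (f i j + 2 * f (i + 1) j + 2 * f i (j + 1) + f (i + 1) (j + 1)) := by
  rw [setIntegral_congr_fun (measurableSet_gridCell h x₀ y₀ i j)
      (eqOn_gridInterp_cellInterp hh x₀ y₀ f i j),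
    setIntegral_gridCell_comp_localCoords hh x₀ y₀ i j (continuous_uncurry_cellInterp _ _ _ _),
    integral_integral_cellInterp, smul_eq_mul]
  ring

lemma setIntegral_gridInterp (hh : 0 < h) (x₀ y₀ : ℝ) (m n : ℕ) (f : ℤ → ℤ → ℝ) :
    ∫ p in Set.Ico x₀ (x₀ + m * h) ×ˢ Set.Ico y₀ (y₀ + n * h), gridInterp h x₀ y₀ f p =
      h ^ 2 / 6 * ∑ i ∈ Finset.range m, ∑ j ∈ Finset.range n,
        (f i j + 2 * f (i + 1) j + 2 * f i (j + 1) + f (i + 1) (j + 1)) := by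
  simp only [setIntegral_eq_sum_gridCell hh x₀ y₀ m n
    (fun i _ j _ ↦ integrableOn_gridInterp_gridCell hh x₀ y₀ f i j),
    setIntegral_gridInterp_gridCell hh, Finset.mul_sum]

end GridInterp

section Sums

lemma sum_range_intCast_add_one {G : Type*} [AddCommGroup G] (F : ℤ → G) (n : ℕ) :
    ∑ i ∈ Finset.range n, F (i + 1) = ∑ i ∈ Finset.range n, F i + (F n - F 0) := by
  have telescope := Finset.sum_range_sub (fun i : ℕ ↦ F i) n
  push_cast [Finset.sum_sub_distrib] at telescope
  rw [← telescope, add_sub_cancel]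

lemma sum_range_intCast_eq_add_sum_Ico {M : Type*} [AddCommMonoid M] (F : ℤ → M) {n : ℕ}
    (hn : 1 ≤ n) : ∑ i ∈ Finset.range n, F i = F 0 + ∑ i ∈ Finset.Ico 1 (n : ℤ), F i := by
  have image_cast : (Finset.Ico 1 n).image (Nat.cast : ℕ → ℤ) = Finset.Ico 1 (n : ℤ) :=
    Finset.coe_injective (by simp [Nat.image_cast_int_Ico])
  rw [← image_cast, Finset.sum_image Nat.cast_injective.injOn, Finset.range_eq_Ico,
    Finset.sum_eq_sum_Ico_succ_bot hn, Nat.cast_zero]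

lemma sum_sum_cornerWeights {R : Type*} [CommRing R] (f : ℤ → ℤ → R) (m n : ℕ) :
    ∑ i ∈ Finset.range m, ∑ j ∈ Finset.range n,
        (f i j + 2 * f (i + 1) j + 2 * f i (j + 1) + f (i + 1) (j + 1)) =
      6 * ∑ i ∈ Finset.range m, ∑ j ∈ Finset.range n, f i j
        + 3 * (∑ i ∈ Finset.range m, (f i n - f i 0) + ∑ j ∈ Finset.range n, (f m j - f 0 j))
        + (f m n - f m 0 - f 0 n + f 0 0) := by
  have shift_j (i : ℤ) : ∑ j ∈ Finset.range n, f i (j + 1) =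
      ∑ j ∈ Finset.range n, f i j + (f i n - f i 0) := sum_range_intCast_add_one (f i) n
  have shift_i := sum_range_intCast_add_one (fun i ↦ ∑ j ∈ Finset.range n, f i j) m
  have shift_edges := sum_range_intCast_add_one (fun i ↦ f i n - f i 0) m
  simp only [Finset.sum_add_distrib, ← Finset.mul_sum, shift_j, shift_i, shift_edges]
  rw [Finset.sum_sub_distrib (fun j : ℕ ↦ f m j)]
  ring

end Sums

theorem interp_integral_sub_gridSum_general
    (h : ℝ) (hh : 0 < h) (m n : ℕ) (hm : 1 ≤ m) (hn : 1 ≤ n) (x₀ y₀ : ℝ) (f : ℤ → ℤ → ℝ) :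
    (∫ p in (Set.Ico x₀ (x₀ + m * h) ×ˢ Set.Ico y₀ (y₀ + n * h)), gridInterp h x₀ y₀ f p)
      - h ^ 2 * ∑ i ∈ Finset.range m, ∑ j ∈ Finset.range n, f i j
    = h ^ 2 / 2 * (∑ i ∈ Finset.Ico 1 (m : ℤ), (f i n - f i 0)
        + ∑ j ∈ Finset.Ico 1 (n : ℤ), (f m j - f 0 j))
      + h ^ 2 / 6 * (2 * f 0 n + 2 * f m 0 + f m n - 5 * f 0 0) := by
  rw [setIntegral_gridInterp hh, sum_sum_cornerWeights,
    sum_range_intCast_eq_add_sum_Ico (fun i ↦ f i n - f i 0) hm,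
    sum_range_intCast_eq_add_sum_Ico (fun j ↦ f m j - f 0 j) hn]
  ring

/-- **Boundary formula** for the error between the grid sum
`S_n = h² Σ_{i=1}^{n} Σ_{j=1}^{n} f(x_{i−1}, y_{j−1})` and the integral
`T_n = ∫_{[x₀,x_n) × [y₀,y_n)} f̄` of the piecewise-linear interpolation `f̄`:
only boundary vertices contribute to `T_n − S_n`. -/
theorem interp_integral_sub_gridSum
    (h : ℝ) (hh : 0 < h) (n : ℕ) (hn : 1 ≤ n) (x₀ y₀ : ℝ) (f : ℤ → ℤ → ℝ) :
    (∫ p in (Set.Ico x₀ (x₀ + n * h) ×ˢ Set.Ico y₀ (y₀ + n * h)), gridInterp h x₀ y₀ f p)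
      - h ^ 2 * ∑ i ∈ Finset.range n, ∑ j ∈ Finset.range n, f i j
    = h ^ 2 / 2 * ∑ i ∈ Finset.Ico 1 (n : ℤ),
        (f i n + f n i - f 0 i - f i 0)
      + h ^ 2 / 6 * (2 * f 0 n + 2 * f n 0 + f n n - 5 * f 0 0) := by
  rw [interp_integral_sub_gridSum_general h hh n n hn hn, ← Finset.sum_add_distrib]
  congr! 3 with i
  ring
end
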